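/- Let n ≥ 2 and let F₀ : Bⁿ → ℂⁿ be locally biholomorphic with F₀(0) = 0, DF₀(0) = Id, and ∇(JF₀)(0) = Λ = (λ, 0, …, 0) with λ > 0 real. Assume that for every biholomorphic automorphism σ of Bⁿ the Koebe transform G of F₀ by σ satisfies |∇(JG)(0)| ≤ λ. Writing S^k_{ij} = S^k_{ij}F₀(0) and S⁰_{ij} = S⁰_{ij}F₀(0), the following equations hold: λ² + (n+1)·S¹₁₁·λ − (n+1)²·S⁰₁₁ − (n+1)² = 0, and S¹₁ⱼ·λ − (n+1)·S⁰₁ⱼ = 0 for every j = 2,…,n. -/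

import Mathlib

open scoped BigOperators

noncomputable section

/-- Partial derivative `∂f/∂z_i` of a scalar-valued holomorphic function on `ℂⁿ`. -/
def pd (n : ℕ) (i : Fin n) (f : (Fin n → ℂ) → ℂ) (z : Fin n → ℂ) : ℂ :=
  fderiv ℂ f z (Pi.single i 1)

/-- Second partial derivative `∂²f/∂z_i∂z_j`. -/
def pd2 (n : ℕ) (i j : Fin n) (f : (Fin n → ℂ) → ℂ) (z : Fin n → ℂ) : ℂ :=
  pd n i (fun w => pd n j f w) z

/-- Complex Jacobian matrix `DF`. -/
def Jac (n : ℕ) (F : (Fin n → ℂ) → (Fin n → ℂ)) (z : Fin n → ℂ) :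
    Matrix (Fin n) (Fin n) ℂ :=
  Matrix.of fun i j => pd n j (fun w => F w i) z

/-- Jacobian determinant `JF = det DF`. -/
def JDet (n : ℕ) (F : (Fin n → ℂ) → (Fin n → ℂ)) (z : Fin n → ℂ) : ℂ :=
  (Jac n F z).det

/-- Oda's Schwarzian derivative `S^k_{ij}F`; the derivative of `log JF` is expressed
by the logarithmic derivative `(∂JF/∂z)/JF`, which is the derivative of any local
branch of the logarithm. -/
def oSchw (n : ℕ) (F : (Fin n → ℂ) → (Fin n → ℂ)) (i j k : Fin n) (z : Fin n → ℂ) : ℂ :=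
  (∑ l, pd2 n i j (fun w => F w l) z * (Jac n F z)⁻¹ k l)
    - (1 / ((n : ℂ) + 1)) *
        ((if k = i then 1 else 0) * (pd n j (JDet n F) z / JDet n F z)
          + (if k = j then 1 else 0) * (pd n i (JDet n F) z / JDet n F z))

/-- `S⁰_{ij}F`, defined through a local branch `u₀` of `(JF)^{-1/(n+1)}`. -/
def oS0 (n : ℕ) (F : (Fin n → ℂ) → (Fin n → ℂ)) (u₀ : (Fin n → ℂ) → ℂ)
    (i j : Fin n) (z : Fin n → ℂ) : ℂ :=
  (u₀ z)⁻¹ * (pd2 n i j u₀ z - ∑ k, oSchw n F i j k z * pd n k u₀ z)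

/-- Euclidean norm on `ℂⁿ`. -/
def euclNorm (n : ℕ) (v : Fin n → ℂ) : ℝ := Real.sqrt (∑ i, ‖v i‖ ^ 2)

/-- Euclidean open unit ball `Bⁿ ⊆ ℂⁿ`. -/
def eball (n : ℕ) : Set (Fin n → ℂ) := {z | euclNorm n z < 1}

/-- A biholomorphic automorphism of the unit ball: a holomorphic bijection of `Bⁿ`
onto itself with holomorphic inverse. -/
def IsAutB (n : ℕ) (σ : (Fin n → ℂ) → (Fin n → ℂ)) : Prop :=
  DifferentiableOn ℂ σ (eball n) ∧ Set.BijOn σ (eball n) (eball n) ∧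
    ∃ τ : (Fin n → ℂ) → (Fin n → ℂ), DifferentiableOn ℂ τ (eball n) ∧
      (∀ z ∈ eball n, τ (σ z) = z) ∧ (∀ w ∈ eball n, σ (τ w) = w)

/-- The automorphism of `Bⁿ` with `σ(0) = (ζ₁,0,…,0)` used in Lemma 3.2. -/
def sigmaA (n : ℕ) [NeZero n] (ζ : ℂ) (z : Fin n → ℂ) : Fin n → ℂ := fun i =>
  if i = 0 then (z 0 + ζ) / (1 + (starRingEnd ℂ) ζ * z 0)
  else ((Real.sqrt (1 - ‖ζ‖ ^ 2) : ℂ) * z i) / (1 + (starRingEnd ℂ) ζ * z 0)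

/-- The Koebe transform `G(z) = Dσ(0)⁻¹ DF₀(σ(0))⁻¹ (F₀(σ(z)) − F₀(σ(0)))`. -/
def Koebe (n : ℕ) (F₀ σ : (Fin n → ℂ) → (Fin n → ℂ)) (z : Fin n → ℂ) : Fin n → ℂ :=
  Matrix.mulVec ((Jac n σ 0)⁻¹ * (Jac n F₀ (σ 0))⁻¹) (F₀ (σ z) - F₀ (σ 0))

/-- The conjugation `G(z) = U⁻¹·F₀(U·z)` of `F₀` by a unitary matrix `U`. -/
def unitKoebe (n : ℕ) (F₀ : (Fin n → ℂ) → (Fin n → ℂ)) (U : Matrix (Fin n) (Fin n) ℂ)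
    (z : Fin n → ℂ) : Fin n → ℂ :=
  Matrix.mulVec U⁻¹ (F₀ (Matrix.mulVec U z))

/-- The Schwarzian derivative operator `SF(z)(v) = (vᵗ𝕊¹F(z)v, …, vᵗ𝕊ⁿF(z)v)`. -/
def SchwOp (n : ℕ) (F : (Fin n → ℂ) → (Fin n → ℂ)) (z v : Fin n → ℂ) : Fin n → ℂ :=
  fun k => ∑ i, ∑ j, v i * oSchw n F i j k z * v j

/-- The squared Bergman norm `‖v‖_z² = Σ_{i,j} g_{ij}(z) v_i conj(v_j)` on `Bⁿ`. -/
def bergSq (n : ℕ) (z v : Fin n → ℂ) : ℝ :=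
  (∑ i, ∑ j, (((n : ℂ) + 1) / (((1 - (euclNorm n z) ^ 2 : ℝ) : ℂ)) ^ 2) *
      ((if i = j then ((1 - (euclNorm n z) ^ 2 : ℝ) : ℂ) else 0)
        + (starRingEnd ℂ) (z i) * z j) * v i * (starRingEnd ℂ) (v j)).re

/-- Membership in the linearly invariant family `F_α`. -/
def memF (n : ℕ) (α : ℝ) (F : (Fin n → ℂ) → (Fin n → ℂ)) : Prop :=
  DifferentiableOn ℂ F (eball n) ∧ (∀ z ∈ eball n, JDet n F z ≠ 0) ∧
    F 0 = 0 ∧ Jac n F 0 = 1 ∧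
    ∀ z ∈ eball n, ∀ v : Fin n → ℂ, bergSq n z v = 1 →
      Real.sqrt (bergSq n z (SchwOp n F z v)) ≤ α

open scoped Topology

theorem osgood_aux {n : ℕ} {f : (Fin n → ℂ) → ℂ} {x₀ : Fin n → ℂ} {R M : ℝ} (hR : 0 < R)
    (hf : DifferentiableOn ℂ f (Metric.ball x₀ R)) (hM : ∀ x ∈ Metric.ball x₀ R, ‖f x‖ ≤ M)
    (v : Fin n → ℂ) (hv : ‖v‖ ≤ 1) :
    DifferentiableAt ℂ (fun z => fderiv ℂ f z v) x₀ := by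
  have hM0 : 0 ≤ M := (norm_nonneg _).trans (hM x₀ (Metric.mem_ball_self hR))
  -- derivative bound
  have hder : ∀ x ∈ Metric.ball x₀ (R/2), ‖fderiv ℂ f x‖ ≤ 2 * M / (R/2) := by
    intro x hx
    have hsub : Metric.ball x (R/2) ⊆ Metric.ball x₀ R :=
      Metric.ball_subset_ball' (by have := Metric.mem_ball.1 hx; linarith)
    apply Complex.norm_fderiv_le_div_of_mapsTo_ball (hf.mono hsub) _ (by positivity)
    intro y hy
    rw [Metric.mem_closedBall, dist_eq_norm]
    calc ‖f y - f x‖ ≤ ‖f y‖ + ‖f x‖ := norm_sub_le _ _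
      _ ≤ M + M := add_le_add (hM _ (hsub hy)) (hM _ (hsub (Metric.mem_ball_self (by positivity))))
      _ = 2 * M := by ring
  set C : NNReal := ⟨2 * M / (R/2), by positivity⟩ with hC
  have hdiffat : ∀ x ∈ Metric.ball x₀ R, DifferentiableAt ℂ f x := fun x hx =>
    hf.differentiableAt (Metric.isOpen_ball.mem_nhds hx)
  have hlip : LipschitzOnWith C f (Metric.ball x₀ (R/2)) := by
    apply Convex.lipschitzOnWith_of_nnnorm_fderiv_le (𝕜 := ℂ) _ _ (convex_ball _ _)
    · intro x hx
      exact hdiffat x (Metric.ball_subset_ball (by linarith) hx)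
    · intro x hx
      exact hder x hx
  set ρ : ℝ := R / 8 with hρ
  have hρ0 : 0 < ρ := by positivity
  have hcm : ∀ t : ℝ, ‖circleMap 0 ρ t‖ = ρ := fun t => by
    simp [circleMap, abs_of_pos hρ0]
  have hin : ∀ x ∈ Metric.ball x₀ ρ, ∀ ξ : ℂ, ‖ξ‖ ≤ ρ → x + ξ • v ∈ Metric.ball x₀ (R/2) := by
    intro x hx ξ hξ
    rw [Metric.mem_ball, dist_eq_norm] at *
    have h1 : ‖ξ • v‖ ≤ ρ := by
      rw [norm_smul]; nlinarith [norm_nonneg v, norm_nonneg ξ]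
    calc ‖x + ξ • v - x₀‖ = ‖(x - x₀) + ξ • v‖ := by congr 1; abel
      _ ≤ ‖x - x₀‖ + ‖ξ • v‖ := norm_add_le _ _
      _ < R / 2 := by rw [hρ] at *; linarith
  let c : ℝ → ℂ := fun t => deriv (circleMap 0 ρ) t * (1 / (circleMap 0 ρ t) ^ 2)
  have hne : ∀ t, circleMap 0 ρ t ≠ 0 := fun t h => by
    have := hcm t; rw [h, norm_zero] at this; exact hρ0.ne this
  have hcc : Continuous c := by
    have h2 : Continuous (deriv (circleMap 0 ρ)) := by
      have : deriv (circleMap 0 ρ) = fun t => circleMap 0 ρ t * Complex.I := by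
        funext t; simp [deriv_circleMap]
      rw [this]; fun_prop
    refine h2.mul (continuous_const.div (by fun_prop) (fun t => pow_ne_zero _ (hne t)))
  have hFc : ∀ x ∈ Metric.ball x₀ ρ, Continuous (fun t : ℝ => c t * f (x + circleMap 0 ρ t • v)) := by
    intro x hx
    refine hcc.mul ?_
    have : ContinuousOn f (Metric.ball x₀ (R/2)) := hlip.continuousOn
    refine this.comp_continuous (by fun_prop) (fun t => hin x hx _ (hcm t).le)
  have key := intervalIntegral.hasFDerivAt_integral_of_dominated_loc_of_lip (𝕜 := ℂ)
    (μ := MeasureTheory.volume) (a := 0) (b := 2 * Real.pi)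
    (F := fun x t => c t * f (x + circleMap 0 ρ t • v))
    (F' := fun t => c t • fderiv ℂ f (x₀ + circleMap 0 ρ t • v))
    (x₀ := x₀) (s := Metric.ball x₀ ρ) (bound := fun t => ‖c t‖ * C)
    (Metric.ball_mem_nhds _ hρ0)
    (by
      filter_upwards [Metric.ball_mem_nhds x₀ hρ0] with x hx
      exact (hFc x hx).aestronglyMeasurable)
    ((hFc x₀ (Metric.mem_ball_self hρ0)).intervalIntegrable _ _)
    (by
      have h1 : Measurable (fun t : ℝ => fderiv ℂ f (x₀ + circleMap 0 ρ t • v)) :=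
        (measurable_fderiv ℂ f).comp (Continuous.measurable (by fun_prop))
      exact (hcc.aestronglyMeasurable).smul h1.aestronglyMeasurable)
    (by
      refine Filter.Eventually.of_forall fun t _ => ?_
      refine LipschitzOnWith.of_dist_le_mul fun x hx y hy => ?_
      have := hlip.dist_le_mul _ (hin x hx _ (hcm t).le) _ (hin y hy _ (hcm t).le)
      rw [dist_add_right] at this
      simp only [dist_eq_norm] at this ⊢
      rw [← mul_sub, norm_mul]
      have h3 : ((Real.nnabs (‖c t‖ * C) : NNReal) : ℝ) = ‖c t‖ * C := by
        rw [Real.coe_nnabs, abs_of_nonneg (by positivity)]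
      rw [h3, mul_assoc]
      exact mul_le_mul_of_nonneg_left this (norm_nonneg _))
    ((by fun_prop : Continuous fun t => ‖c t‖ * (C : ℝ)).intervalIntegrable _ _)
    (by
      refine Filter.Eventually.of_forall fun t _ => ?_
      have h1 : HasFDerivAt f (fderiv ℂ f (x₀ + circleMap 0 ρ t • v)) (x₀ + circleMap 0 ρ t • v) :=
        (hdiffat _ (Metric.ball_subset_ball (by linarith)
          (hin x₀ (Metric.mem_ball_self hρ0) _ (hcm t).le))).hasFDerivAt
      have h2 : HasFDerivAt (fun x => f (x + circleMap 0 ρ t • v))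
          (fderiv ℂ f (x₀ + circleMap 0 ρ t • v)) x₀ := by
        have := HasFDerivAt.comp x₀ h1 ((hasFDerivAt_id x₀).add_const (circleMap 0 ρ t • v))
        rw [ContinuousLinearMap.comp_id] at this
        exact this
      exact h2.const_mul (c t))
  have heq : (fun z => fderiv ℂ f z v) =ᶠ[𝓝 x₀]
      fun x => (2 * Real.pi * Complex.I)⁻¹ * ∫ t in (0:ℝ)..2 * Real.pi, c t * f (x + circleMap 0 ρ t • v) := by
    filter_upwards [Metric.ball_mem_nhds x₀ hρ0] with x hx
    have hline : ∀ ξ : ℂ, ‖ξ‖ ≤ ρ → HasDerivAt (fun ξ : ℂ => f (x + ξ • v)) (fderiv ℂ f (x + ξ • v) v) ξ := by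
      intro ξ hξ
      have h1 := (hdiffat _ (Metric.ball_subset_ball (by linarith) (hin x hx ξ hξ))).hasFDerivAt
      have h2 : HasDerivAt (fun ξ : ℂ => x + ξ • v) v ξ := by
        simpa using ((hasDerivAt_id ξ).smul_const v).const_add x
      exact h1.comp_hasDerivAt ξ h2
    have h3 := DifferentiableOn.deriv_eq_smul_circleIntegral (c := 0) (f := fun ξ : ℂ => f (x + ξ • v)) hρ0
      (fun ξ hξ => (hline ξ (by simpa using hξ)).differentiableAt.differentiableWithinAt)
    have h4 := (hline 0 (by simpa using hρ0.le)).deriv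
    rw [h4] at h3
    simp only [zero_smul, add_zero] at h3
    rw [circleIntegral] at h3
    rw [eq_inv_mul_iff_mul_eq₀ (by simp [Real.pi_ne_zero])]
    simp only [smul_eq_mul, sub_zero] at h3
    rw [← h3]
    refine intervalIntegral.integral_congr fun t _ => ?_
    dsimp only [c]; ring
  exact (key.2.differentiableAt.const_mul _).congr_of_eventuallyEq heq

theorem osgood_pd {n : ℕ} {f : (Fin n → ℂ) → ℂ} {x₀ : Fin n → ℂ}
    (hf : ∀ᶠ z in 𝓝 x₀, DifferentiableAt ℂ f z) :
    DifferentiableAt ℂ (fderiv ℂ f) x₀ := by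
  have hc : ∀ᶠ z in 𝓝 x₀, ‖f z‖ < ‖f x₀‖ + 1 :=
    (hf.self_of_nhds.continuousAt.norm).eventually_lt continuousAt_const (by simp)
  obtain ⟨R, hR, h⟩ := Metric.eventually_nhds_iff_ball.1 (hf.and hc)
  have h1 : ∀ k : Fin n, DifferentiableAt ℂ (fun z => fderiv ℂ f z (Pi.single k 1)) x₀ := fun k =>
    osgood_aux hR (fun z hz => (h z hz).1.differentiableWithinAt) (fun z hz => (h z hz).2.le) _
      (by
        rw [pi_norm_le_iff_of_nonneg zero_le_one]
        intro i
        by_cases hi : i = k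
        · subst hi; simp
        · simp [hi])
  have h2 : fderiv ℂ f = fun z => ∑ k, (fderiv ℂ f z (Pi.single k 1)) •
      (ContinuousLinearMap.proj k : (Fin n → ℂ) →L[ℂ] ℂ) := by
    funext z
    refine ContinuousLinearMap.coe_injective (LinearMap.pi_ext' fun i => ?_)
    ext
    simp [Pi.single_apply]
  rw [h2]
  fun_prop

theorem osgood_symm {n : ℕ} {f : (Fin n → ℂ) → ℂ} {x₀ : Fin n → ℂ}
    (hf : ∀ᶠ z in 𝓝 x₀, DifferentiableAt ℂ f z) (v w : Fin n → ℂ) :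
    fderiv ℂ (fun z => fderiv ℂ f z v) x₀ w = fderiv ℂ (fun z => fderiv ℂ f z w) x₀ v := by
  have h := (osgood_pd hf).hasFDerivAt
  have hs := second_derivative_symmetric_of_eventually (hf.mono fun _ h => h.hasFDerivAt) h v w
  have e : ∀ v w, fderiv ℂ (fun z => fderiv ℂ f z v) x₀ w = fderiv ℂ (fderiv ℂ f) x₀ w v := by
    intro v w
    have := (h.clm_apply (hasFDerivAt_const v x₀)).fderiv
    rw [this]; simp
  rw [e, e, hs]

/-! ### The ball -/

theorem mem_eball_iff {n : ℕ} {z : Fin n → ℂ} : z ∈ eball n ↔ ∑ i, ‖z i‖ ^ 2 < 1 := by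
  simp only [eball, euclNorm, Set.mem_ofPred_eq]
  rw [Real.sqrt_lt' one_pos, one_pow]

theorem continuous_euclNorm (n : ℕ) : Continuous (euclNorm n) := by
  unfold euclNorm; fun_prop

theorem isOpen_eball (n : ℕ) : IsOpen (eball n) :=
  isOpen_lt (continuous_euclNorm n) continuous_const

theorem euclNorm_zero (n : ℕ) : euclNorm n 0 = 0 := by
  simp [euclNorm]

theorem zero_mem_eball (n : ℕ) : (0 : Fin n → ℂ) ∈ eball n := by
  simp [mem_eball_iff]

theorem euclNorm_single {n : ℕ} (k : Fin n) (ζ : ℂ) : euclNorm n (Pi.single k ζ) = ‖ζ‖ := by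
  unfold euclNorm
  rw [Finset.sum_eq_single k]
  · simp
  · intro b _ hb; simp [hb]
  · simp

theorem norm_le_euclNorm {n : ℕ} (k : Fin n) (v : Fin n → ℂ) : ‖v k‖ ≤ euclNorm n v := by
  unfold euclNorm
  apply Real.le_sqrt_of_sq_le
  exact Finset.single_le_sum (f := fun i => ‖v i‖ ^ 2) (fun i _ => by positivity) (Finset.mem_univ k)

/-! ### Automorphisms -/

/-- The automorphism of the ball moving the origin to `ζ e_k`. -/
def autK (n : ℕ) (k : Fin n) (ζ : ℂ) (z : Fin n → ℂ) : Fin n → ℂ := fun i =>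
  if i = k then (z k + ζ) / (1 + (starRingEnd ℂ) ζ * z k)
  else ((Real.sqrt (1 - ‖ζ‖ ^ 2) : ℂ) * z i) / (1 + (starRingEnd ℂ) ζ * z k)

theorem conj_mul_self' (ζ : ℂ) : (starRingEnd ℂ) ζ * ζ = ((‖ζ‖ ^ 2 : ℝ) : ℂ) := by
  rw [Complex.conj_mul']; push_cast; rfl

theorem denom_ne {n : ℕ} {ζ : ℂ} (hζ : ‖ζ‖ < 1) (k : Fin n) {z : Fin n → ℂ} (hz : z ∈ eball n) :
    1 + (starRingEnd ℂ) ζ * z k ≠ 0 := by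
  intro h
  have h1 : ‖z k‖ < 1 := (norm_le_euclNorm k z).trans_lt hz
  have h2 : (starRingEnd ℂ) ζ * z k = -1 := by linear_combination h
  have h3 := congrArg norm h2
  rw [norm_mul, RCLike.norm_conj, norm_neg, norm_one] at h3
  nlinarith [norm_nonneg ζ, norm_nonneg (z k)]

theorem norm_ident (a ζ : ℂ) : ‖1 + (starRingEnd ℂ) ζ * a‖ ^ 2 - ‖a + ζ‖ ^ 2
    = (1 - ‖ζ‖ ^ 2) * (1 - ‖a‖ ^ 2) := by
  simp only [← Complex.normSq_eq_norm_sq, Complex.normSq_apply]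
  simp
  ring

theorem autK_mapsTo {n : ℕ} {ζ : ℂ} (hζ : ‖ζ‖ < 1) (k : Fin n) {z : Fin n → ℂ} (hz : z ∈ eball n) :
    autK n k ζ z ∈ eball n := by
  have hD := denom_ne hζ k hz
  have hs : 0 < 1 - ‖ζ‖ ^ 2 := by nlinarith [norm_nonneg ζ]
  rw [mem_eball_iff] at *
  rw [← Finset.add_sum_erase _ _ (Finset.mem_univ k)] at *
  have hD' : 0 < ‖1 + (starRingEnd ℂ) ζ * z k‖ ^ 2 := by positivity
  have e1 : ∑ x ∈ Finset.univ.erase k, ‖autK n k ζ z x‖ ^ 2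
      = (1 - ‖ζ‖ ^ 2) * (∑ x ∈ Finset.univ.erase k, ‖z x‖ ^ 2)
        / ‖1 + (starRingEnd ℂ) ζ * z k‖ ^ 2 := by
    rw [Finset.mul_sum, Finset.sum_div]
    refine Finset.sum_congr rfl fun x hx => ?_
    have hx' : x ≠ k := Finset.ne_of_mem_erase hx
    simp only [autK, hx', if_false, norm_div, norm_mul, div_pow, mul_pow]
    rw [Complex.norm_real, Real.norm_eq_abs, sq_abs, Real.sq_sqrt hs.le]
  have e2 : ‖autK n k ζ z k‖ ^ 2 = ‖z k + ζ‖ ^ 2 / ‖1 + (starRingEnd ℂ) ζ * z k‖ ^ 2 := by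
    simp [autK, div_pow]
  rw [e1, e2, ← add_div, div_lt_one hD']
  have := norm_ident (z k) ζ
  nlinarith

theorem autK_inv {n : ℕ} {ζ : ℂ} (hζ : ‖ζ‖ < 1) (k : Fin n) {z : Fin n → ℂ} (hz : z ∈ eball n) :
    autK n k (-ζ) (autK n k ζ z) = z := by
  have hD := denom_ne hζ k hz
  have hs : 0 < 1 - ‖ζ‖ ^ 2 := by nlinarith [norm_nonneg ζ]
  have hsC : (1 : ℂ) - (starRingEnd ℂ) ζ * ζ ≠ 0 := by
    rw [conj_mul_self']; exact_mod_cast hs.ne'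
  have hsq : ((Real.sqrt (1 - ‖ζ‖ ^ 2) : ℝ) : ℂ) * (Real.sqrt (1 - ‖ζ‖ ^ 2) : ℝ)
      = 1 - (starRingEnd ℂ) ζ * ζ := by
    rw [conj_mul_self', ← Complex.ofReal_mul, Real.mul_self_sqrt hs.le]; push_cast; rfl
  have hE : 1 + (starRingEnd ℂ) (-ζ) * ((z k + ζ) / (1 + (starRingEnd ℂ) ζ * z k))
      = (1 - (starRingEnd ℂ) ζ * ζ) / (1 + (starRingEnd ℂ) ζ * z k) := by
    rw [map_neg]; field_simp; ring
  funext i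
  by_cases hi : i = k
  · subst hi
    simp only [autK, if_true]
    rw [hE, div_eq_iff (div_ne_zero hsC hD), div_add' _ _ _ hD, ← mul_div_assoc]
    congr 1
    ring
  · simp only [autK, hi, if_true, if_false]
    rw [hE, norm_neg]
    field_simp
    linear_combination (z i) * hsq

theorem hasFDerivAt_quot {n : ℕ} {p q : (Fin n → ℂ) → ℂ} {p' q' : (Fin n → ℂ) →L[ℂ] ℂ}
    {z : Fin n → ℂ} (hp : HasFDerivAt p p' z) (hq : HasFDerivAt q q' z) (h0 : q z ≠ 0) :
    HasFDerivAt (fun w => p w / q w) ((q z)⁻¹ • p' - (p z / q z ^ 2) • q') z := by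
  have h1 : HasFDerivAt (fun w => (q w)⁻¹) ((-(q z ^ 2)⁻¹) • q') z :=
    (hasDerivAt_inv h0).comp_hasFDerivAt z hq
  have h2 := hp.mul h1
  simp only [div_eq_mul_inv]
  convert! h2 using 1
  ext v
  simp
  ring

theorem autK_hasFDerivAt {n : ℕ} {ζ : ℂ} (k i : Fin n) {z : Fin n → ℂ}
    (hD : 1 + (starRingEnd ℂ) ζ * z k ≠ 0) :
    HasFDerivAt (fun w => autK n k ζ w i)
      (if i = k then
        (1 + (starRingEnd ℂ) ζ * z k)⁻¹ • (ContinuousLinearMap.proj k : (Fin n → ℂ) →L[ℂ] ℂ)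
        - ((z k + ζ) / (1 + (starRingEnd ℂ) ζ * z k) ^ 2) •
          ((starRingEnd ℂ) ζ • (ContinuousLinearMap.proj k : (Fin n → ℂ) →L[ℂ] ℂ))
      else
        (1 + (starRingEnd ℂ) ζ * z k)⁻¹ • ((Real.sqrt (1 - ‖ζ‖ ^ 2) : ℂ) •
          (ContinuousLinearMap.proj i : (Fin n → ℂ) →L[ℂ] ℂ))
        - (((Real.sqrt (1 - ‖ζ‖ ^ 2) : ℂ) * z i) / (1 + (starRingEnd ℂ) ζ * z k) ^ 2) •
          ((starRingEnd ℂ) ζ • (ContinuousLinearMap.proj k : (Fin n → ℂ) →L[ℂ] ℂ))) z := by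
  have hpr : ∀ j : Fin n, HasFDerivAt (fun w : Fin n → ℂ => w j)
      (ContinuousLinearMap.proj j : (Fin n → ℂ) →L[ℂ] ℂ) z := fun j =>
    (ContinuousLinearMap.proj j : (Fin n → ℂ) →L[ℂ] ℂ).hasFDerivAt
  have hq : HasFDerivAt (fun w : Fin n → ℂ => 1 + (starRingEnd ℂ) ζ * w k)
      ((starRingEnd ℂ) ζ • (ContinuousLinearMap.proj k : (Fin n → ℂ) →L[ℂ] ℂ)) z :=
    ((hpr k).const_mul _).const_add 1
  by_cases hi : i = k
  · simp only [autK, hi, if_true]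
    exact hasFDerivAt_quot ((hpr k).add_const ζ) hq hD
  · simp only [autK, hi, if_false]
    exact hasFDerivAt_quot ((hpr i).const_mul _) hq hD

theorem autK_differentiableAt {n : ℕ} {ζ : ℂ} (k : Fin n) {z : Fin n → ℂ}
    (hD : 1 + (starRingEnd ℂ) ζ * z k ≠ 0) : DifferentiableAt ℂ (autK n k ζ) z :=
  differentiableAt_pi.2 fun i => (autK_hasFDerivAt k i hD).differentiableAt

theorem isAutB_autK {n : ℕ} {ζ : ℂ} (hζ : ‖ζ‖ < 1) (k : Fin n) : IsAutB n (autK n k ζ) := by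
  have hζ' : ‖-ζ‖ < 1 := by rwa [norm_neg]
  have hi2 : ∀ w ∈ eball n, autK n k ζ (autK n k (-ζ) w) = w := fun w hw => by
    have := autK_inv hζ' k hw
    rwa [neg_neg] at this
  refine ⟨fun z hz => (autK_differentiableAt k (denom_ne hζ k hz)).differentiableWithinAt,
    ⟨fun z hz => autK_mapsTo hζ k hz, fun z hz w hw h => ?_, fun w hw => ?_⟩,
    autK n k (-ζ), fun z hz => (autK_differentiableAt k (denom_ne hζ' k hz)).differentiableWithinAt,
    fun z hz => autK_inv hζ k hz, hi2⟩
  · rw [← autK_inv hζ k hz, h, autK_inv hζ k hw]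
  · exact ⟨_, autK_mapsTo hζ' k hw, hi2 w hw⟩

theorem autK_zero {n : ℕ} (k : Fin n) (ζ : ℂ) : autK n k ζ 0 = Pi.single k ζ := by
  funext i
  by_cases hi : i = k
  · subst hi; simp [autK]
  · simp [autK, hi]

theorem JDet_autK {n : ℕ} [NeZero n] {ζ : ℂ} (hζ : ‖ζ‖ < 1) (k : Fin n) {z : Fin n → ℂ}
    (hD : 1 + (starRingEnd ℂ) ζ * z k ≠ 0) :
    JDet n (autK n k ζ) z = ((1 - ‖ζ‖ ^ 2 : ℝ) : ℂ) * (Real.sqrt (1 - ‖ζ‖ ^ 2) : ℂ) ^ (n - 1)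
      / (1 + (starRingEnd ℂ) ζ * z k) ^ (n + 1) := by
  set D := 1 + (starRingEnd ℂ) ζ * z k with hDdef
  set s : ℂ := (Real.sqrt (1 - ‖ζ‖ ^ 2) : ℂ) with hsdef
  have hs : 0 < 1 - ‖ζ‖ ^ 2 := by nlinarith [norm_nonneg ζ]
  have hsC : ((1 - ‖ζ‖ ^ 2 : ℝ) : ℂ) ≠ 0 := by exact_mod_cast hs.ne'
  have hkk : D⁻¹ - (z k + ζ) / D ^ 2 * (starRingEnd ℂ) ζ = ((1 - ‖ζ‖ ^ 2 : ℝ) : ℂ) / D ^ 2 := by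
    have := conj_mul_self' ζ
    field_simp
    rw [hDdef]
    push_cast at this ⊢
    linear_combination -this
  unfold JDet
  rw [Matrix.det_eq_of_forall_row_eq_smul_add_const
    (B := Matrix.diagonal fun i => if i = k then ((1 - ‖ζ‖ ^ 2 : ℝ) : ℂ) / D ^ 2 else s / D)
    (fun i => if i = k then 0 else
      - (s * z i * (starRingEnd ℂ) ζ) / ((1 - ‖ζ‖ ^ 2 : ℝ) : ℂ)) k (by simp)]
  · rw [Matrix.det_diagonal, ← Finset.mul_prod_erase _ _ (Finset.mem_univ k), if_pos rfl,
      Finset.prod_congr rfl (g := fun _ => s / D)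
        (fun x hx => if_neg (Finset.ne_of_mem_erase hx)), Finset.prod_const,
      Finset.card_erase_of_mem (Finset.mem_univ k), Finset.card_univ, Fintype.card_fin, div_pow]
    have : n + 1 = 2 + (n - 1) := by have := NeZero.pos n; omega
    rw [this, pow_add]
    field_simp
  · intro i j
    simp only [Jac, Matrix.of_apply, pd]
    rw [(autK_hasFDerivAt k i hD).fderiv, ← hDdef, ← hsdef]
    by_cases hi : i = k
    · subst hi
      by_cases hj : j = i
      · subst hj
        simp only [if_true, Matrix.diagonal_apply_eq]
        push_cast at hkk
        simpa using hkk
      · have hj' : i ≠ j := fun h => hj h.symm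
        simp [hj', Matrix.diagonal_apply_ne]
    · by_cases hj : j = k
      · subst hj
        simp only [hi, if_false, Matrix.diagonal_apply_eq, Matrix.diagonal_apply_ne _ hi]
        push_cast at hsC
        simp [hi]
        field_simp
      · have hj' : k ≠ j := fun h => hj h.symm
        by_cases hij : i = j
        · subst hij
          simp [hi, hj', Matrix.diagonal_apply_ne]
          field_simp
        · simp [hi, hj', hij, Matrix.diagonal_apply_ne]

/-! ### Koebe transforms -/

theorem fderiv_apply_eq_sum {n : ℕ} (L : (Fin n → ℂ) →L[ℂ] ℂ) (v : Fin n → ℂ) :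
    L v = ∑ l, L (Pi.single l 1) * v l := by
  conv_lhs => rw [pi_eq_sum_univ' v]
  rw [map_sum]
  refine Finset.sum_congr rfl fun l _ => ?_
  rw [map_smul, smul_eq_mul, mul_comm]

theorem fderiv_coord {n : ℕ} {σ : (Fin n → ℂ) → (Fin n → ℂ)} {z : Fin n → ℂ}
    (hσ : DifferentiableAt ℂ σ z) (l : Fin n) (v : Fin n → ℂ) :
    fderiv ℂ σ z v l = fderiv ℂ (fun w => σ w l) z v := by
  rw [((hasFDerivAt_pi'.1 hσ.hasFDerivAt) l).fderiv]
  rfl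

theorem Jac_comp {n : ℕ} {F σ : (Fin n → ℂ) → (Fin n → ℂ)} {z : Fin n → ℂ}
    (hF : DifferentiableAt ℂ F (σ z)) (hσ : DifferentiableAt ℂ σ z) :
    Jac n (fun w => F (σ w)) z = Jac n F (σ z) * Jac n σ z := by
  ext i j
  simp only [Jac, Matrix.mul_apply, Matrix.of_apply, pd]
  have hFi : DifferentiableAt ℂ (fun w => F w i) (σ z) := differentiableAt_pi.1 hF i
  have h1 : fderiv ℂ (fun w => F (σ w) i) z = (fderiv ℂ (fun w => F w i) (σ z)).comp (fderiv ℂ σ z) :=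
    (hFi.hasFDerivAt.comp z hσ.hasFDerivAt).fderiv
  rw [h1, ContinuousLinearMap.comp_apply, fderiv_apply_eq_sum]
  refine Finset.sum_congr rfl fun l _ => ?_
  rw [fderiv_coord hσ]

theorem JDet_Koebe {n : ℕ} {F σ : (Fin n → ℂ) → (Fin n → ℂ)} {z : Fin n → ℂ}
    (hF : DifferentiableAt ℂ F (σ z)) (hσ : DifferentiableAt ℂ σ z) :
    JDet n (Koebe n F σ) z =
      (JDet n σ 0)⁻¹ * (JDet n F (σ 0))⁻¹ * (JDet n F (σ z) * JDet n σ z) := by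
  have h : Jac n (Koebe n F σ) z =
      ((Jac n σ 0)⁻¹ * (Jac n F (σ 0))⁻¹) * Jac n (fun w => F (σ w)) z := by
    ext i j
    simp only [Jac, Matrix.of_apply, pd]
    rw [Matrix.mul_apply]
    simp only [Matrix.of_apply]
    have hd : ∀ l, HasFDerivAt (fun w => F (σ w) l - F (σ 0) l)
        (fderiv ℂ (fun w => F (σ w) l) z) z := fun l => by
      have h2 : DifferentiableAt ℂ (fun w => F (σ w)) z := hF.comp z hσ
      exact (differentiableAt_pi.1 h2 l).hasFDerivAt.sub_const _
    have h3 := (HasFDerivAt.fun_sum (u := Finset.univ) fun l _ =>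
      (hd l).const_mul (((Jac n σ 0)⁻¹ * (Jac n F (σ 0))⁻¹) i l)).fderiv
    have h4 : (fun w => Koebe n F σ w i) = fun w => ∑ l, (((Jac n σ 0)⁻¹ * (Jac n F (σ 0))⁻¹) i l) *
        (F (σ w) l - F (σ 0) l) := by
      funext w; rfl
    rw [h4, h3]
    simp [Jac, pd]
  unfold JDet
  rw [h, Jac_comp hF hσ, Matrix.det_mul, Matrix.det_mul, Matrix.det_mul, Matrix.det_nonsing_inv,
    Matrix.det_nonsing_inv]
  simp only [Ring.inverse_eq_inv']

/-- the diagonal entry of `Dσ(0)` at `(0,0)`. -/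
def dcoef (n : ℕ) [NeZero n] (k : Fin n) (ζ : ℂ) : ℝ :=
  if 0 = k then 1 - ‖ζ‖ ^ 2 else Real.sqrt (1 - ‖ζ‖ ^ 2)

theorem fderiv_autK_zero {n : ℕ} [NeZero n] (k : Fin n) (ζ : ℂ) :
    fderiv ℂ (autK n k ζ) 0 (Pi.single 0 1) = (dcoef n k ζ : ℂ) • Pi.single 0 1 := by
  have hD : 1 + (starRingEnd ℂ) ζ * (0 : Fin n → ℂ) k ≠ 0 := by simp
  funext i
  rw [fderiv_coord (autK_differentiableAt k hD),
    (autK_hasFDerivAt k i hD).fderiv]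
  have := conj_mul_self' ζ
  by_cases hi : i = k
  · subst hi
    by_cases h0 : 0 = i
    · subst h0
      simp [dcoef]
      push_cast at this
      linear_combination this
    · have h0' : i ≠ 0 := fun h => h0 h.symm
      simp [h0']
  · by_cases h0 : i = 0
    · subst h0
      simp [hi, dcoef]
    · simp [hi, h0]

theorem pd_Koebe {n : ℕ} [NeZero n] {F : (Fin n → ℂ) → (Fin n → ℂ)} {ζ : ℂ} (hζ : ‖ζ‖ < 1) (k : Fin n)
    (hF : DifferentiableOn ℂ F (eball n)) (hJ : DifferentiableAt ℂ (JDet n F) (Pi.single k ζ))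
    (hJ0 : JDet n F (Pi.single k ζ) ≠ 0) :
    pd n 0 (JDet n (Koebe n F (autK n k ζ))) 0 =
      dcoef n k ζ * (pd n 0 (JDet n F) (Pi.single k ζ) / JDet n F (Pi.single k ζ))
        - (if 0 = k then ((n : ℂ) + 1) * (starRingEnd ℂ) ζ else 0) := by
  have hs : 0 < 1 - ‖ζ‖ ^ 2 := by nlinarith [norm_nonneg ζ]
  have hD0 : 1 + (starRingEnd ℂ) ζ * (0 : Fin n → ℂ) k ≠ 0 := by simp
  set C : ℂ := ((1 - ‖ζ‖ ^ 2 : ℝ) : ℂ) * (Real.sqrt (1 - ‖ζ‖ ^ 2) : ℂ) ^ (n - 1) with hC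
  have hC0 : C ≠ 0 := by
    rw [hC]
    refine mul_ne_zero (by exact_mod_cast hs.ne') (pow_ne_zero _ ?_)
    exact_mod_cast (Real.sqrt_pos.2 hs).ne'
  have hev : JDet n (Koebe n F (autK n k ζ)) =ᶠ[𝓝 0] fun z =>
      (JDet n F (Pi.single k ζ))⁻¹ * (JDet n F (autK n k ζ z) *
        ((1 + (starRingEnd ℂ) ζ * z k) ^ (n + 1))⁻¹) := by
    filter_upwards [(isOpen_eball n).mem_nhds (zero_mem_eball n)] with z hz
    have hD := denom_ne hζ k hz
    rw [JDet_Koebe (hF.differentiableAt ((isOpen_eball n).mem_nhds (autK_mapsTo hζ k hz)))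
      (autK_differentiableAt k hD), JDet_autK hζ k hD, JDet_autK hζ k hD0, autK_zero, ← hC]
    simp
    field_simp
  have hσ := (autK_differentiableAt (ζ := ζ) k hD0).hasFDerivAt
  have hJσ : HasFDerivAt (fun z => JDet n F (autK n k ζ z))
      ((fderiv ℂ (JDet n F) (Pi.single k ζ)).comp (fderiv ℂ (autK n k ζ) 0)) 0 := by
    have : HasFDerivAt (JDet n F) (fderiv ℂ (JDet n F) (Pi.single k ζ)) (autK n k ζ 0) := by
      rw [autK_zero]; exact hJ.hasFDerivAt
    exact this.comp 0 hσ
  have hq : HasFDerivAt (fun w : Fin n → ℂ => 1 + (starRingEnd ℂ) ζ * w k)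
      ((starRingEnd ℂ) ζ • (ContinuousLinearMap.proj k : (Fin n → ℂ) →L[ℂ] ℂ)) 0 :=
    ((ContinuousLinearMap.proj k : (Fin n → ℂ) →L[ℂ] ℂ).hasFDerivAt.const_mul _).const_add 1
  have hq2 : HasFDerivAt (fun w : Fin n → ℂ => ((1 + (starRingEnd ℂ) ζ * w k) ^ (n + 1))⁻¹)
      ((-((n : ℂ) + 1)) • ((starRingEnd ℂ) ζ • (ContinuousLinearMap.proj k : (Fin n → ℂ) →L[ℂ] ℂ))) 0 := by
    have h1 : HasDerivAt (fun x : ℂ => (x ^ (n + 1))⁻¹) (-((n : ℂ) + 1))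
        (1 + (starRingEnd ℂ) ζ * (0 : Fin n → ℂ) k) := by
      have := (hasDerivAt_pow (n + 1) (1 : ℂ)).fun_inv (by simp)
      simpa using this
    exact HasDerivAt.comp_hasFDerivAt (h₂ := fun x : ℂ => (x ^ (n + 1))⁻¹) 0 h1 hq
  unfold pd
  rw [hev.fderiv_eq, ((hJσ.fun_mul hq2).const_mul _).fderiv]
  simp only [smul_apply, add_apply,
    ContinuousLinearMap.comp_apply, fderiv_autK_zero, map_smul, autK_zero,
    ContinuousLinearMap.proj_apply, smul_eq_mul]
  by_cases h0 : 0 = k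
  · subst h0
    simp
    field_simp
    ring
  · have h0' : k ≠ 0 := fun h => h0 h.symm
    simp [h0, h0']
    field_simp

theorem logDeriv_u {n : ℕ} {J u : (Fin n → ℂ) → ℂ} {z : Fin n → ℂ}
    (hu : DifferentiableAt ℂ u z) (hpow : ∀ᶠ w in 𝓝 z, u w ^ (n + 1) * J w = 1) :
    u z ≠ 0 ∧ J z ≠ 0 ∧ DifferentiableAt ℂ J z ∧
      ∀ i, pd n i J z / J z = -((n : ℂ) + 1) * (pd n i u z / u z) := by
  have hz := hpow.self_of_nhds
  have hu0 : u z ≠ 0 := by rintro h; simp [h] at hz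
  have hJ0 : J z ≠ 0 := by rintro h; simp [h] at hz
  have hev : J =ᶠ[𝓝 z] fun w => (u w ^ (n + 1))⁻¹ :=
    hpow.mono fun w hw => eq_inv_of_mul_eq_one_right hw
  have h1 : HasDerivAt (fun x : ℂ => (x ^ (n + 1))⁻¹)
      (-(((n + 1 : ℕ) : ℂ) * u z ^ n) / (u z ^ (n + 1)) ^ 2) (u z) := by
    have := (hasDerivAt_pow (n + 1) (u z)).fun_inv (pow_ne_zero _ hu0)
    simpa using this
  have h2 : HasFDerivAt J
      ((-(((n + 1 : ℕ) : ℂ) * u z ^ n) / (u z ^ (n + 1)) ^ 2) • fderiv ℂ u z) z :=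
    (h1.comp_hasFDerivAt z hu.hasFDerivAt).congr_of_eventuallyEq hev
  refine ⟨hu0, hJ0, h2.differentiableAt, fun i => ?_⟩
  unfold pd
  rw [h2.fderiv, hev.self_of_nhds]
  simp only [smul_apply, smul_eq_mul]
  push_cast
  field_simp
  ring

/-! ### The first variation -/

theorem dcoef_deriv {n : ℕ} [NeZero n] (k : Fin n) (w : ℂ) :
    HasDerivAt (fun t : ℝ => dcoef n k ((t : ℂ) * w)) 0 0 := by
  have h1 : HasDerivAt (fun t : ℝ => 1 - ‖(t : ℂ) * w‖ ^ 2) 0 0 := by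
    have : (fun t : ℝ => 1 - ‖(t : ℂ) * w‖ ^ 2) = fun t : ℝ => 1 - t ^ 2 * ‖w‖ ^ 2 := by
      funext t; rw [norm_mul, Complex.norm_real, Real.norm_eq_abs, mul_pow, sq_abs]
    rw [this]
    have := (((hasDerivAt_pow 2 (0 : ℝ)).mul_const (‖w‖ ^ 2)).const_sub 1)
    simpa using this
  unfold dcoef
  by_cases h : 0 = k
  · simpa [h] using h1
  · simp only [h, if_false]
    have := h1.sqrt (by simp)
    simpa using this

theorem first_variation {n : ℕ} [NeZero n] {p u : (Fin n → ℂ) → ℂ} (k : Fin n) (w : ℂ)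
    {r lam : ℝ} (hr : 0 < r)
    (hp : DifferentiableAt ℂ p 0) (hu : DifferentiableAt ℂ u 0) (hu0 : u 0 = 1)
    (hp0 : p 0 = -(lam : ℂ) / ((n : ℂ) + 1))
    (hle : ∀ ζ : ℂ, ‖ζ‖ < r → ‖(dcoef n k ζ : ℂ) * (-((n : ℂ) + 1) * (p (Pi.single k ζ) / u (Pi.single k ζ)))
        - (if 0 = k then ((n : ℂ) + 1) * (starRingEnd ℂ) ζ else 0)‖ ≤ lam) :
    (w * (pd n k p 0 - p 0 * pd n k u 0) + (if 0 = k then (starRingEnd ℂ) w else 0)).re = 0 := by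
  have hn : ((n : ℂ) + 1) ≠ 0 := Nat.cast_add_one_ne_zero n
  let g : ℝ → ℂ := fun t => (dcoef n k ((t : ℂ) * w) : ℂ) *
    (-((n : ℂ) + 1) * (p (Pi.single k ((t : ℂ) * w)) / u (Pi.single k ((t : ℂ) * w))))
        - (if 0 = k then ((n : ℂ) + 1) * (starRingEnd ℂ) ((t : ℂ) * w) else 0)
  have hlin : HasDerivAt (fun t : ℝ => (Pi.single k ((t : ℂ) * w) : Fin n → ℂ)) (w • Pi.single k 1) 0 := by
    have h1 : (fun t : ℝ => (Pi.single k ((t : ℂ) * w) : Fin n → ℂ))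
        = fun t : ℝ => (t : ℂ) • (w • (Pi.single k 1 : Fin n → ℂ)) := by
      funext t i
      by_cases hi : i = k
      · subst hi; simp
      · simp [hi]
    rw [h1]
    have := (Complex.ofRealCLM.hasDerivAt (x := (0 : ℝ))).smul_const (w • (Pi.single k 1 : Fin n → ℂ))
    simpa using this
  have hcomp : ∀ f : (Fin n → ℂ) → ℂ, DifferentiableAt ℂ f 0 →
      HasDerivAt (fun t : ℝ => f (Pi.single k ((t : ℂ) * w))) (w * pd n k f 0) 0 := by
    intro f hf
    have h2 : HasFDerivAt f ((fderiv ℂ f 0).restrictScalars ℝ) (Pi.single k (((0 : ℝ) : ℂ) * w)) := by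
      simpa using hf.hasFDerivAt.restrictScalars ℝ
    have h3 := h2.comp_hasDerivAt (0 : ℝ) hlin
    have h4 : ((fderiv ℂ f 0).restrictScalars ℝ) (w • Pi.single k 1) = w * pd n k f 0 := by
      simp [pd]
    rw [h4] at h3
    exact h3
  have hg : HasDerivAt g (-((n : ℂ) + 1) * (w * (pd n k p 0 - p 0 * pd n k u 0) +
      (if 0 = k then (starRingEnd ℂ) w else 0))) 0 := by
    have hq := ((hcomp p hp).fun_div (hcomp u hu) (by simp [hu0])).const_mul (-((n : ℂ) + 1))
    have hd := (dcoef_deriv k w).ofReal_comp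
    have hc : HasDerivAt (fun t : ℝ => if 0 = k then ((n : ℂ) + 1) * (starRingEnd ℂ) ((t : ℂ) * w) else 0)
        (if 0 = k then ((n : ℂ) + 1) * (starRingEnd ℂ) w else 0) 0 := by
      by_cases h : 0 = k
      · simp only [h, if_true, map_mul, Complex.conj_ofReal]
        have := ((Complex.ofRealCLM.hasDerivAt (x := (0 : ℝ))).mul_const ((starRingEnd ℂ) w)).const_mul
          ((n : ℂ) + 1)
        simpa using this
      · simp only [h, if_false]
        exact hasDerivAt_const _ _
    have := (hd.fun_mul hq).fun_sub hc
    refine this.congr_deriv ?_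
    have hd0 : dcoef n k 0 = 1 := by simp [dcoef]
    by_cases h : 0 = k
    · simp [h, hd0, hu0]
      ring
    · simp only [h, if_false, Complex.ofReal_zero, zero_mul, hd0, hu0, Pi.single_zero,
        Complex.ofReal_one]
      ring
  have hre := Complex.reCLM.hasFDerivAt.comp_hasDerivAt (0 : ℝ) hg
  have hd0 : dcoef n k 0 = 1 := by simp [dcoef]
  have hg0 : g 0 = (lam : ℂ) := by
    simp only [g, Complex.ofReal_zero, zero_mul, hd0, hu0, Pi.single_zero, Complex.ofReal_one,
      map_zero, mul_zero, ite_self, hp0]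
    field_simp
    ring
  have hmax : IsLocalMax (Complex.reCLM ∘ g) 0 := by
    have hcont : ContinuousAt (fun t : ℝ => ‖(t : ℂ) * w‖) 0 := by fun_prop
    have hnear : ∀ᶠ t : ℝ in 𝓝 0, ‖(t : ℂ) * w‖ < r :=
      hcont.eventually_lt continuousAt_const (by simpa using hr)
    filter_upwards [hnear] with t ht
    have h1 : (g t).re ≤ lam := (Complex.re_le_norm _).trans (hle _ ht)
    simpa [hg0] using h1
  have hz := hmax.hasDerivAt_eq_zero hre
  rw [show -((n : ℂ) + 1) = ((-((n : ℝ) + 1) : ℝ) : ℂ) by push_cast; ring, Complex.reCLM_apply,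
    Complex.re_ofReal_mul] at hz
  rcases mul_eq_zero.1 hz with h | h
  · exfalso
    have : (0 : ℝ) ≤ n := Nat.cast_nonneg n
    linarith
  · exact h

theorem main_aux {n : ℕ} [NeZero n] {p u : (Fin n → ℂ) → ℂ} (k : Fin n)
    {r lam : ℝ} (hr : 0 < r)
    (hp : DifferentiableAt ℂ p 0) (hu : DifferentiableAt ℂ u 0) (hu0 : u 0 = 1)
    (hp0 : p 0 = -(lam : ℂ) / ((n : ℂ) + 1))
    (hle : ∀ ζ : ℂ, ‖ζ‖ < r → ‖(dcoef n k ζ : ℂ) * (-((n : ℂ) + 1) * (p (Pi.single k ζ) / u (Pi.single k ζ)))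
        - (if 0 = k then ((n : ℂ) + 1) * (starRingEnd ℂ) ζ else 0)‖ ≤ lam) :
    pd n k p 0 - p 0 * pd n k u 0 = if 0 = k then -1 else 0 := by
  have h1 := first_variation k 1 hr hp hu hu0 hp0 hle
  have h2 := first_variation k Complex.I hr hp hu hu0 hp0 hle
  generalize pd n k p 0 - p 0 * pd n k u 0 = A at *
  by_cases h : 0 = k
  · simp [h] at *
    apply Complex.ext <;> simp <;> linarith
  · simp [h] at *
    apply Complex.ext <;> simp <;> linarith

/-- if the extremal `F₀` is normalized so that `∇(JF₀)(0) = (λ,0,…,0)`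
with `λ > 0`, then `λ² + (n+1)S¹₁₁λ − (n+1)²S⁰₁₁ − (n+1)² = 0` and
`S¹₁ⱼλ − (n+1)S⁰₁ⱼ = 0` for `j = 2,…,n`. -/
theorem stmt_11 (n : ℕ) [NeZero n] (hn : 2 ≤ n) (F₀ : (Fin n → ℂ) → (Fin n → ℂ))
    (hF₀hol : DifferentiableOn ℂ F₀ (eball n))
    (hF₀J : ∀ z ∈ eball n, JDet n F₀ z ≠ 0)
    (hF₀0 : F₀ 0 = 0) (hF₀D : Jac n F₀ 0 = 1)
    -- `u₀` is a local branch of `(JF₀)^{-1/(n+1)}` with `u₀(0) = 1`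
    (u₀ : (Fin n → ℂ) → ℂ) (r : ℝ) (hr : 0 < r) (hr1 : r ≤ 1)
    (hu₀hol : DifferentiableOn ℂ u₀ {z | euclNorm n z < r}) (hu₀0 : u₀ 0 = 1)
    (hu₀pow : ∀ z, euclNorm n z < r → u₀ z ^ (n + 1) * JDet n F₀ z = 1)
    (lam : ℝ) (hlam : 0 < lam)
    (hΛ : ∀ k : Fin n, pd n k (JDet n F₀) 0 = if k = 0 then (lam : ℂ) else 0)
    (hextremal : ∀ σ : (Fin n → ℂ) → (Fin n → ℂ), IsAutB n σ →
      euclNorm n (fun i => pd n i (JDet n (Koebe n F₀ σ)) 0) ≤ lam) :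
    (lam : ℂ) ^ 2 + ((n : ℂ) + 1) * oSchw n F₀ 0 0 0 0 * lam
        - ((n : ℂ) + 1) ^ 2 * oS0 n F₀ u₀ 0 0 0 - ((n : ℂ) + 1) ^ 2 = 0 ∧
    ∀ j : Fin n, j ≠ 0 →
      oSchw n F₀ 0 j 0 0 * lam - ((n : ℂ) + 1) * oS0 n F₀ u₀ 0 j 0 = 0 := by
  have hn1 : ((n : ℂ) + 1) ≠ 0 := Nat.cast_add_one_ne_zero n
  have hopen : IsOpen {z : Fin n → ℂ | euclNorm n z < r} :=
    isOpen_lt (continuous_euclNorm n) continuous_const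
  have hudiff : ∀ z, euclNorm n z < r → DifferentiableAt ℂ u₀ z := fun z hz =>
    hu₀hol.differentiableAt (hopen.mem_nhds hz)
  have hlog : ∀ z, euclNorm n z < r → _ := fun z hz =>
    logDeriv_u (J := JDet n F₀) (hudiff z hz) (by filter_upwards [hopen.mem_nhds hz] with w hw using hu₀pow w hw)
  have h0r : euclNorm n 0 < r := by rw [euclNorm_zero]; exact hr
  have hev : ∀ᶠ z in 𝓝 (0 : Fin n → ℂ), DifferentiableAt ℂ u₀ z :=
    by
    filter_upwards [hopen.mem_nhds h0r] with w hw using hudiff w hw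
  have hpdiff : DifferentiableAt ℂ (fun z => pd n 0 u₀ z) 0 :=
    (osgood_pd hev).clm_apply (differentiableAt_const _)
  -- first derivatives of `u₀`
  have hJ0 : JDet n F₀ 0 = 1 := by unfold JDet; rw [hF₀D, Matrix.det_one]
  have hu1 : ∀ k : Fin n, pd n k u₀ 0 = if k = 0 then -(lam : ℂ) / ((n : ℂ) + 1) else 0 := by
    intro k
    have h := (hlog 0 h0r).2.2.2 k
    rw [hΛ, hJ0, hu₀0, div_one, div_one] at h
    by_cases hk : k = 0
    · simp only [hk, if_true] at h ⊢
      rw [eq_div_iff hn1]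
      linear_combination h
    · simp only [hk, if_false] at h ⊢
      have := mul_eq_zero.1 h.symm
      rcases this with h' | h'
      · exact absurd (neg_eq_zero.1 h') hn1
      · exact h'
  have hmain : ∀ k : Fin n, pd2 n k 0 u₀ 0 - pd n 0 u₀ 0 * pd n k u₀ 0 = if 0 = k then -1 else 0 := by
    intro k
    refine main_aux (lam := lam) k hr hpdiff (hudiff 0 h0r) hu₀0 (by simp [hu1]) ?_
    intro ζ hζ
    have hζr : euclNorm n (Pi.single k ζ) < r := by rwa [euclNorm_single]
    have hζ1 : ‖ζ‖ < 1 := hζ.trans_le hr1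
    obtain ⟨h1, h2, h3, h4⟩ := hlog _ hζr
    have h5 := hextremal _ (isAutB_autK hζ1 k)
    have h6 := (norm_le_euclNorm 0 _).trans h5
    rw [pd_Koebe hζ1 k hF₀hol h3 h2, h4] at h6
    exact h6
  have hsymm : ∀ j : Fin n, pd2 n 0 j u₀ 0 = pd2 n j 0 u₀ 0 := fun j => osgood_symm hev _ _
  have hS0 : ∀ j : Fin n, oS0 n F₀ u₀ 0 j 0 =
      pd2 n 0 j u₀ 0 + oSchw n F₀ 0 j 0 0 * (lam / ((n : ℂ) + 1)) := by
    intro j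
    unfold oS0
    rw [Finset.sum_eq_single 0 (fun b _ hb => by simp [hu1, hb]) (by simp), hu1, hu₀0]
    simp only [if_true]
    ring
  constructor
  · have h := hmain 0
    rw [hu1] at h
    simp only [if_true] at h
    have h' : pd2 n 0 0 u₀ 0 = -1 + (-(lam : ℂ) / ((n : ℂ) + 1)) * (-(lam : ℂ) / ((n : ℂ) + 1)) := by
      linear_combination h
    rw [hS0, h']
    field_simp
    ring
  · intro j hj
    have h := hmain j
    rw [hu1 j] at h
    simp only [hj, hj.symm, if_false, mul_zero, sub_zero] at h
    rw [hS0, hsymm, h]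
    field_simp
    ring


end
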